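/- Let 𝕏 be a σ-finite measure space and ℳ, 𝒩 Banach L^0(𝕏)-modules. For every α ∈ ℳ ⊗̂_π 𝒩 it holds that |α|_π = ⋀{ Σ_{n∈ℕ} |v_n||w_n| : (v_n)_{n∈ℕ} ⊆ ℳ, (w_n)_{n∈ℕ} ⊆ 𝒩, (v_n ⊗ w_n)_{n∈ℕ} ∈ ℓ₁(ℕ, ℳ ⊗̂_π 𝒩), α = Σ_{n∈ℕ} v_n ⊗ w_n }, where Σ_{n∈ℕ} v_n ⊗ w_n denotes the sum of the summable family {v_n ⊗ w_n}_{n∈ℕ} in ℳ ⊗̂_π 𝒩. -/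

import Mathlib

/-!
Any admissible series has value at least `|p|`: for finite `F`, the triangle inequality gives
`|p| ≤ |p - ∑_F v n ⊗ w n| + ∑_F |v n| |w n|`, and the first term has infimum `0` over `F`.

Conversely, elements of `L0` are measured by `size f = ∫ min(|f|, 1)`, and it suffices to find, for
each `δ`, an admissible series whose value differs from `|p|` by size at most `δ`
(`nonpos_of_le_small`). Finite representations of a tensor can be glued along measurable sets
(`piReps_inf`), so the values of representations form a set stable under binary infima, and the
projective norm is approximated in size by the value of a single representation
(`exists_small_of_isGLB`, `exists_rep`). Approximating `p` by algebraic tensors `α k` with summable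
errors and concatenating nearly optimal representations of `α 0` and of the differences
`α (k + 1) - α k` yields the series (`exists_series`). Summability of the sizes forces a.e.
convergence of the values, because only finitely many terms exceed `1` at almost every point
(`exists_series_sum`).
-/

open MeasureTheory Filter Set TensorProduct

noncomputable section

namespace Paper

variable {X : Type*} [MeasurableSpace X]

/-- The space `L⁰(𝕏)` of real-valued measurable functions up to `μ`-a.e. equality. -/
abbrev L0 (μ : Measure X) : Type _ := X →ₘ[μ] ℝ

instance (μ : Measure X) : CommRing (L0 μ) :=
  { (inferInstance : AddCommGroup (L0 μ)), (inferInstance : CommMonoid (L0 μ)) with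
    left_distrib := fun a b c => AEEqFun.toGerm_injective <| by
      simp only [AEEqFun.mul_toGerm, AEEqFun.add_toGerm, mul_add]
    right_distrib := fun a b c => AEEqFun.toGerm_injective <| by
      simp only [AEEqFun.mul_toGerm, AEEqFun.add_toGerm, add_mul]
    zero_mul := fun a => AEEqFun.toGerm_injective <| by
      simp only [AEEqFun.mul_toGerm, AEEqFun.zero_toGerm, zero_mul]
    mul_zero := fun a => AEEqFun.toGerm_injective <| by
      simp only [AEEqFun.mul_toGerm, AEEqFun.zero_toGerm, mul_zero] }

/-- The distance on `L⁰(𝕏)` inducing the topology of convergence in measure, defined through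
the auxiliary finite measure `μ.toFinite` (which satisfies `μ ≪ μ.toFinite ≪ μ`). -/
noncomputable def dL0 (μ : Measure X) [SFinite μ] (f g : L0 μ) : ℝ :=
  ∫ x, min |f x - g x| 1 ∂(μ.toFinite)

/-- A Banach `L⁰(𝕏)`-module: a module over `L⁰(𝕏)` endowed with a pointwise norm, complete
with respect to the induced distance. -/
class BanachMod (μ : Measure X) [SFinite μ] (M : Type*) [AddCommGroup M]
    [Module (L0 μ) M] where
  pn : M → L0 μ
  pn_nonneg : ∀ v : M, 0 ≤ pn v
  pn_eq_zero : ∀ v : M, pn v = 0 ↔ v = 0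
  pn_add_le : ∀ v w : M, pn (v + w) ≤ pn v + pn w
  pn_smul : ∀ (f : L0 μ) (v : M), pn (f • v) = |f| * pn v
  complete : ∀ u : ℕ → M,
    (∀ ε : ℝ, 0 < ε → ∃ N : ℕ, ∀ m ≥ N, ∀ n ≥ N, dL0 μ (pn (u m - u n)) 0 < ε) →
    ∃ v : M, Tendsto (fun n => dL0 μ (pn (u n - v)) 0) atTop (nhds 0)

/-- The pointwise norm of a Banach `L⁰(𝕏)`-module, with the measure explicit. -/
noncomputable def pn (μ : Measure X) [SFinite μ] {M : Type*} [AddCommGroup M]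
    [Module (L0 μ) M] [BanachMod μ M] (v : M) : L0 μ :=
  BanachMod.pn v

/-- The distance on a Banach `L⁰(𝕏)`-module. -/
noncomputable def dM (μ : Measure X) [SFinite μ] {M : Type*} [AddCommGroup M]
    [Module (L0 μ) M] [BanachMod μ M] (v w : M) : ℝ :=
  dL0 μ (pn μ (v - w)) 0

section Defs

variable (μ : Measure X) [SFinite μ]
variable {M N : Type*} [AddCommGroup M] [Module (L0 μ) M] [BanachMod μ M]
  [AddCommGroup N] [Module (L0 μ) N] [BanachMod μ N]

/-- The set of admissible bounds of a map between Banach `L⁰(𝕏)`-modules; the pointwise norm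
`|T|` of a homomorphism is the infimum of this set. -/
def homBddSet (T : M → N) : Set (L0 μ) :=
  {g | 0 ≤ g ∧ ∀ v, pn μ (T v) ≤ g * pn μ v}

/-- A homomorphism of Banach `L⁰(𝕏)`-modules: an `L⁰(𝕏)`-linear map admitting a bound
`g ∈ L⁰(𝕏)⁺` with `|T v| ≤ g |v|` (equivalently, `L⁰(𝕏)`-linear and continuous). -/
def IsHom (T : M →ₗ[L0 μ] N) : Prop :=
  ∃ g, g ∈ homBddSet μ (⇑T)

/-- The set of admissible bounds of an `L⁰(𝕏)`-valued map (for elements of the dual module). -/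
def dualBddSet (ω : M → L0 μ) : Set (L0 μ) :=
  {g | 0 ≤ g ∧ ∀ v, |ω v| ≤ g * pn μ v}

/-- Membership in the dual module `ℳ*`: an `L⁰(𝕏)`-linear map `ω : ℳ → L⁰(𝕏)` admitting a
bound `g ∈ L⁰(𝕏)⁺` with `|ω v| ≤ g |v|`. -/
def IsDual (ω : M →ₗ[L0 μ] L0 μ) : Prop :=
  ∃ g, g ∈ dualBddSet μ (⇑ω)

/-- Membership in the unit disc `𝔻_{ℳ*}` of the dual module: `|ω| ≤ 1`, equivalently
`|ω v| ≤ |v|` for every `v`. -/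
def InDualDisc (ω : M →ₗ[L0 μ] L0 μ) : Prop :=
  ∀ v, |ω v| ≤ pn μ v

/-- The family of pointwise norms `|s - ∑_{i ∈ F ∪ G} v i|` for `G` finite disjoint from `F`,
whose `F`-indexed inf-sup being `0` defines `s = ∑_{i∈I} v i`. -/
def sumUB {I : Type*} (v : I → M) (s : M) (F : Finset I) : Set (L0 μ) :=
  {g | ∃ G : Finset I, Disjoint G F ∧ g = pn μ (s - (∑ i ∈ F, v i + ∑ i ∈ G, v i))}

/-- `HasSumMod μ v s` means that the family `{v_i}` is summable in the Banach `L⁰(𝕏)`-module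
with sum `s`, i.e. `⋀_F ⋁_G |s - ∑_{i ∈ F ∪ G} v_i| = 0` (the inner suprema being the values
of `b`, and the outer infimum being `0`). -/
def HasSumMod {I : Type*} (v : I → M) (s : M) : Prop :=
  ∃ b : Finset I → L0 μ, (∀ F, IsLUB (sumUB μ v s F) (b F)) ∧ IsGLB (Set.range b) 0

/-- A family in a Banach `L⁰(𝕏)`-module is summable if it has a sum. -/
def SummableMod {I : Type*} (v : I → M) : Prop :=
  ∃ s, HasSumMod μ v s

/-- The partial sums `∑_{i ∈ F} |v i|` of the pointwise norms of a family; the element `|v|₁`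
of `ℓ₁(I, ℳ)` is the supremum of this set. -/
def l1PartialSums {I : Type*} (v : I → M) : Set (L0 μ) :=
  {g | ∃ F : Finset I, g = ∑ i ∈ F, pn μ (v i)}

/-- Membership in `ℓ₁(I, ℳ)`: the partial sums of the pointwise norms admit a supremum
(equivalently, an upper bound) in `L⁰(𝕏)`. -/
def Meml1 {I : Type*} (v : I → M) : Prop :=
  ∃ b, IsLUB (l1PartialSums μ v) b

/-- The partial sums `∑_{i ∈ F} |v i|` for an `L⁰(𝕏)`-valued family. -/
def l1PartialSumsF {I : Type*} (v : I → L0 μ) : Set (L0 μ) :=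
  {g | ∃ F : Finset I, g = ∑ i ∈ F, |v i|}

/-- Membership in `ℓ₁(I, L⁰(𝕏))`. -/
def Meml1F {I : Type*} (v : I → L0 μ) : Prop :=
  ∃ b, IsLUB (l1PartialSumsF μ v) b

/-- The set whose infimum defines the projective pointwise norm: all values
`∑_{i=1}^n |v_i||w_i|` over representations `α = ∑_{i=1}^n v_i ⊗ w_i`. -/
def piReps (α : M ⊗[L0 μ] N) : Set (L0 μ) :=
  {g | ∃ (n : ℕ) (v : Fin n → M) (w : Fin n → N),
    α = ∑ i, v i ⊗ₜ[L0 μ] w i ∧ g = ∑ i, pn μ (v i) * pn μ (w i)}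

/-- The set whose supremum defines the injective pointwise norm: all values
`|∑_{i=1}^n ω(v_i) η(w_i)|` over representations `α = ∑_{i=1}^n v_i ⊗ w_i` and elements
`ω ∈ 𝔻_{ℳ*}`, `η ∈ 𝔻_{𝒩*}`. -/
def epsReps (α : M ⊗[L0 μ] N) : Set (L0 μ) :=
  {g | ∃ (n : ℕ) (v : Fin n → M) (w : Fin n → N)
    (ω : M →ₗ[L0 μ] L0 μ) (η : N →ₗ[L0 μ] L0 μ), InDualDisc μ ω ∧ InDualDisc μ η ∧
    α = ∑ i, v i ⊗ₜ[L0 μ] w i ∧ g = |∑ i, ω (v i) * η (w i)|}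

/-- `IsPiTensor μ M N P e` states that the Banach `L⁰(𝕏)`-module `P`, together with the
`L⁰(𝕏)`-linear map `e` defined on the algebraic tensor product, realizes the projective
tensor product `ℳ ⊗̂_π 𝒩`: the pointwise norm of `e α` is the projective pointwise norm
`|α|_π` and the image of `e` is dense. -/
structure IsPiTensor (M N P : Type*) [AddCommGroup M] [Module (L0 μ) M] [BanachMod μ M]
    [AddCommGroup N] [Module (L0 μ) N] [BanachMod μ N]
    [AddCommGroup P] [Module (L0 μ) P] [BanachMod μ P]
    (e : M ⊗[L0 μ] N →ₗ[L0 μ] P) : Prop where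
  pn_emb : ∀ α : M ⊗[L0 μ] N, IsGLB (piReps μ α) (pn μ (e α))
  dense : ∀ p : P, ∀ ε : ℝ, 0 < ε → ∃ α : M ⊗[L0 μ] N, dM μ (e α) p < ε

/-- `IsEpsTensor μ M N P e` states that the Banach `L⁰(𝕏)`-module `P`, together with the
`L⁰(𝕏)`-linear map `e` defined on the algebraic tensor product, realizes the injective
tensor product `ℳ ⊗̂_ε 𝒩`: the pointwise norm of `e α` is the injective pointwise norm
`|α|_ε` and the image of `e` is dense. -/
structure IsEpsTensor (M N P : Type*) [AddCommGroup M] [Module (L0 μ) M] [BanachMod μ M]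
    [AddCommGroup N] [Module (L0 μ) N] [BanachMod μ N]
    [AddCommGroup P] [Module (L0 μ) P] [BanachMod μ P]
    (e : M ⊗[L0 μ] N →ₗ[L0 μ] P) : Prop where
  pn_emb : ∀ α : M ⊗[L0 μ] N, IsLUB (epsReps μ α) (pn μ (e α))
  dense : ∀ p : P, ∀ ε : ℝ, 0 < ε → ∃ α : M ⊗[L0 μ] N, dM μ (e α) p < ε

end Defs

/-! ### Order structure of `L0` -/

section Aux

variable {μ : Measure X}

instance instL0Ordered : IsOrderedAddMonoid (L0 μ) where
  add_le_add_left f g h k := by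
    rw [← AEEqFun.coeFn_le] at h ⊢
    filter_upwards [h, AEEqFun.coeFn_add f k, AEEqFun.coeFn_add g k] with x h1 h2 h3
    rw [h2, h3]
    exact add_le_add_left h1 (k x)

/-- Countable bounded families have a least upper bound, namely the pointwise supremum. -/
theorem exists_isLUB_range {ι : Type*} [Countable ι] [Nonempty ι] (f : ι → L0 μ) (B : L0 μ)
    (hB : ∀ i, f i ≤ B) : ∃ s, IsLUB (range f) s := by
  have hm : Measurable fun x => ⨆ i, f i x := Measurable.iSup fun i => (f i).measurable
  have hb : ∀ᵐ x ∂μ, ∀ i, f i x ≤ B x := ae_all_iff.2 fun i => AEEqFun.coeFn_le.2 (hB i)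
  refine ⟨AEEqFun.mk _ hm.aestronglyMeasurable, ?_, ?_⟩
  · rintro _ ⟨i, rfl⟩
    rw [← AEEqFun.coeFn_le]
    filter_upwards [hb, AEEqFun.coeFn_mk _ hm.aestronglyMeasurable] with x h1 h2
    rw [h2]
    exact le_ciSup (f := fun i => f i x) ⟨B x, by rintro _ ⟨j, rfl⟩; exact h1 j⟩ i
  · intro u hu
    have hu' : ∀ᵐ x ∂μ, ∀ i, f i x ≤ u x :=
      ae_all_iff.2 fun i => AEEqFun.coeFn_le.2 (hu ⟨i, rfl⟩)
    rw [← AEEqFun.coeFn_le]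
    filter_upwards [hu', AEEqFun.coeFn_mk _ hm.aestronglyMeasurable] with x h1 h2
    rw [h2]
    exact ciSup_le h1

theorem L0_mul_nonneg {f g : L0 μ} (hf : 0 ≤ f) (hg : 0 ≤ g) : 0 ≤ f * g := by
  rw [← AEEqFun.coeFn_le] at hf hg ⊢
  filter_upwards [hf, hg, AEEqFun.coeFn_mul f g, AEEqFun.coeFn_zero (μ := μ) (β := ℝ)]
    with x h1 h2 h3 h4
  rw [h4] at h1 h2 ⊢
  rw [h3]
  exact mul_nonneg h1 h2

/-- The infimum of two elements of `L0 μ` is obtained by gluing along the set where the first one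
is the smaller, whose indicator function is `χ`. -/
theorem exists_glue (f g : L0 μ) :
    ∃ χ : L0 μ, 0 ≤ χ ∧ 0 ≤ 1 - χ ∧ f ⊓ g = χ * f + (1 - χ) * g := by
  classical
  have hE : MeasurableSet {x | f x ≤ g x} := measurableSet_le f.measurable g.measurable
  have hm : Measurable ({x | f x ≤ g x}.indicator fun _ => (1 : ℝ)) :=
    measurable_const.indicator hE
  have hmk := AEEqFun.coeFn_mk (μ := μ) _ hm.aestronglyMeasurable
  set χ : L0 μ := AEEqFun.mk _ hm.aestronglyMeasurable
  have h0 := AEEqFun.coeFn_zero (μ := μ) (β := ℝ)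
  have h1 := AEEqFun.coeFn_one (μ := μ) (β := ℝ)
  have hs := AEEqFun.coeFn_sub 1 χ
  refine ⟨χ, ?_, ?_, AEEqFun.ext ?_⟩
  · rw [← AEEqFun.coeFn_le]
    filter_upwards [hmk, h0] with x a b
    rw [a, b]
    exact indicator_nonneg (fun _ _ => zero_le_one) _
  · rw [← AEEqFun.coeFn_le]
    filter_upwards [hmk, h0, h1, hs] with x a b c d
    rw [d, b, Pi.sub_apply, a, c, Pi.zero_apply, Pi.one_apply, indicator_apply]
    split_ifs <;> norm_num
  · filter_upwards [hmk, h1, hs, AEEqFun.coeFn_inf f g, AEEqFun.coeFn_add (χ * f) ((1 - χ) * g),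
      AEEqFun.coeFn_mul χ f, AEEqFun.coeFn_mul (1 - χ) g] with x a b c d k l n
    rw [d, k, Pi.add_apply, l, n, Pi.mul_apply, Pi.mul_apply, c, Pi.sub_apply, a, b, Pi.one_apply,
      indicator_apply]
    split_ifs with hx
    · have hx' : f x ≤ g x := hx
      simp [hx']
    · have hx' : g x ≤ f x := (not_le.1 hx).le
      simp [hx']

/-! ### Convergence in measure -/

theorem size_meas (f : L0 μ) : Measurable fun x => min ‖f x‖ₑ (1 : ENNReal) :=
  f.measurable.enorm.min measurable_const

variable [SFinite μ]

/-- The size `∫ min(|f|, 1)` of `f` with respect to the finite measure equivalent to `μ`, as an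
extended nonnegative real; it equals `dL0 μ f 0`. -/
def size (f : L0 μ) : ENNReal := ∫⁻ x, min ‖f x‖ₑ 1 ∂μ.toFinite

theorem aeFin {p : X → Prop} (h : ∀ᵐ x ∂μ, p x) : ∀ᵐ x ∂μ.toFinite, p x := by
  rwa [ae_toFinite]

theorem size_ne_top (f : L0 μ) : size f ≠ ⊤ := by
  refine ne_top_of_le_ne_top (measure_ne_top μ.toFinite univ) ?_
  calc size f ≤ ∫⁻ _, 1 ∂μ.toFinite := lintegral_mono fun x => min_le_right _ _
    _ = _ := by simp

theorem size_mono {f g : L0 μ} (h : ∀ᵐ x ∂μ, |f x| ≤ |g x|) : size f ≤ size g := by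
  refine lintegral_mono_ae (aeFin ?_)
  filter_upwards [h] with x hx
  refine min_le_min_right _ ?_
  rw [Real.enorm_eq_ofReal_abs, Real.enorm_eq_ofReal_abs]
  exact ENNReal.ofReal_le_ofReal hx

theorem size_mono_nonneg {f g : L0 μ} (hf : 0 ≤ f) (h : f ≤ g) : size f ≤ size g := by
  rw [← AEEqFun.coeFn_le] at h hf
  apply size_mono
  filter_upwards [h, hf, AEEqFun.coeFn_zero (μ := μ) (β := ℝ)] with x h1 h2 h3
  rw [h3] at h2
  exact abs_le_abs_of_nonneg h2 h1

theorem min_add_one_le (a b : ENNReal) : min (a + b) 1 ≤ min a 1 + min b 1 := by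
  rcases le_total a 1 with ha | ha <;> rcases le_total b 1 with hb | hb <;> simp [ha, hb]

theorem size_add_le (f g : L0 μ) : size (f + g) ≤ size f + size g := by
  rw [size, size, size, ← lintegral_add_left (size_meas f)]
  refine lintegral_mono_ae (aeFin ?_)
  filter_upwards [AEEqFun.coeFn_add f g] with x hx
  rw [hx]
  exact (min_le_min_right _ (enorm_add_le _ _)).trans (min_add_one_le _ _)

theorem size_le_of_dL0 {f : L0 μ} {ε : ℝ} (h : dL0 μ f 0 < ε) : size f ≤ ENNReal.ofReal ε := by
  refine le_trans (le_of_eq ?_) (ENNReal.ofReal_le_ofReal h.le)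
  have hm : Measurable fun x => min |f x - (0 : L0 μ) x| 1 :=
    ((f.measurable.sub (0 : L0 μ).measurable).abs).min measurable_const
  rw [dL0, ofReal_integral_eq_lintegral_ofReal]
  · refine lintegral_congr_ae (aeFin ?_)
    filter_upwards [AEEqFun.coeFn_zero (μ := μ) (β := ℝ)] with x hx
    rw [hx, ENNReal.ofReal_min, Real.enorm_eq_ofReal_abs]
    simp
  · refine Integrable.of_bound hm.aestronglyMeasurable 1 (Eventually.of_forall fun x => ?_)
    rw [Real.norm_of_nonneg (le_min (abs_nonneg _) zero_le_one)]
    exact min_le_right _ _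
  · exact Eventually.of_forall fun x => le_min (abs_nonneg _) zero_le_one

theorem ae_of_size_eq_zero {f : L0 μ} (h : size f = 0) : ∀ᵐ x ∂μ, f x = 0 := by
  rw [size, lintegral_eq_zero_iff (size_meas f), EventuallyEq, ae_toFinite] at h
  filter_upwards [h] with x hx
  simpa using hx

/-- An element dominated by elements of arbitrarily small size is nonpositive. -/
theorem nonpos_of_le_small {c : L0 μ}
    (h : ∀ ε : ENNReal, ε ≠ 0 → ∃ f, c ≤ f ∧ size f ≤ ε) : c ≤ 0 := by
  have h0 : size (c ⊔ 0) = 0 := by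
    by_contra hne
    obtain ⟨f, hcf, hf⟩ := h (size (c ⊔ 0) / 2) (ENNReal.half_pos hne).ne'
    have h1 : size (c ⊔ 0) ≤ size f := by
      rw [← AEEqFun.coeFn_le] at hcf
      apply size_mono
      filter_upwards [hcf, AEEqFun.coeFn_sup c 0, AEEqFun.coeFn_zero (μ := μ) (β := ℝ)]
        with x h1 h2 h3
      rw [h2, h3, Pi.zero_apply, abs_of_nonneg le_sup_right]
      exact sup_le (h1.trans (le_abs_self _)) (abs_nonneg _)
    exact absurd (h1.trans hf) (not_le.2 (ENNReal.half_lt_self hne (size_ne_top _)))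
  rw [← AEEqFun.coeFn_le]
  filter_upwards [ae_of_size_eq_zero h0, AEEqFun.coeFn_sup c 0,
    AEEqFun.coeFn_zero (μ := μ) (β := ℝ)] with x h1 h2 h3
  rw [h2, h3] at h1
  rw [h3]
  exact le_sup_left.trans h1.le

theorem min_tsum_le (a : ℕ → ENNReal) : min (∑' k, a k) 1 ≤ ∑' k, min (a k) 1 := by
  by_cases h : ∀ k, a k ≤ 1
  · simp [h]
  · push Not at h
    obtain ⟨k, hk⟩ := h
    calc min (∑' k, a k) 1 ≤ 1 := min_le_right _ _
      _ = min (a k) 1 := (min_eq_right hk.le).symm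
      _ ≤ _ := ENNReal.le_tsum (f := fun k => min (a k) 1) k

theorem tsum_ne_top_of_min (a : ℕ → ENNReal) (ha : ∀ k, a k ≠ ⊤)
    (h : ∑' k, min (a k) 1 ≠ ⊤) : ∑' k, a k ≠ ⊤ := by
  have h1 := ENNReal.tendsto_atTop_zero_of_tsum_ne_top h
  obtain ⟨n, hn⟩ := eventually_atTop.1 (h1.eventually (gt_mem_nhds zero_lt_one))
  rw [← ENNReal.summable.sum_add_tsum_nat_add' (f := a) (k := n)]
  refine ENNReal.add_ne_top.2 ⟨ENNReal.sum_ne_top.2 fun i _ => ha i, ?_⟩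
  refine ne_top_of_le_ne_top h ?_
  rw [← ENNReal.summable.sum_add_tsum_nat_add' (f := fun k => min (a k) 1) (k := n)]
  refine le_trans (ENNReal.tsum_le_tsum fun k => ?_) le_add_self
  refine le_min le_rfl ?_
  by_contra hk
  have := hn (k + n) (by omega)
  rw [min_eq_right (not_le.1 hk).le] at this
  exact lt_irrefl _ this

/-- A series of nonnegative functions whose sizes are summable converges a.e.; its sum is the
supremum of the partial sums, and the remainders are controlled by the sizes of the terms. -/
theorem exists_series_sum (g : ℕ → L0 μ) (hg : ∀ k, 0 ≤ g k) (hs : ∑' k, size (g k) ≠ ⊤) :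
    ∃ G : L0 μ, IsLUB (range fun K => ∑ k ∈ Finset.range K, g k) G ∧
      ∀ K, size (G - ∑ k ∈ Finset.range K, g k) ≤ ∑' k, size (g (k + K)) := by
  have hm : Measurable fun x => (∑' k, ENNReal.ofReal (g k x)).toReal :=
    (Measurable.tsum fun k => (g k).measurable.ennreal_ofReal).ennreal_toReal
  have hg0 : ∀ᵐ x ∂μ, ∀ k, 0 ≤ g k x := by
    refine ae_all_iff.2 fun k => ?_
    filter_upwards [AEEqFun.coeFn_le.2 (hg k), AEEqFun.coeFn_zero (μ := μ) (β := ℝ)] with x h1 h2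
    rwa [h2] at h1
  have hfin : ∀ᵐ x ∂μ, ∑' k, ENNReal.ofReal (g k x) ≠ ⊤ := by
    simp only [size] at hs
    rw [← lintegral_tsum fun k => (size_meas (g k)).aemeasurable] at hs
    have h1 := ae_lt_top (Measurable.tsum fun k => size_meas (g k)) hs
    rw [ae_toFinite] at h1
    filter_upwards [h1, hg0] with x hx h0
    refine tsum_ne_top_of_min _ (fun k => ENNReal.ofReal_ne_top) ?_
    simpa only [Real.enorm_eq_ofReal (h0 _)] using hx.ne
  have hsum : ∀ᵐ x ∂μ, ∀ K, (∑ k ∈ Finset.range K, g k : L0 μ) x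
      = ∑ k ∈ Finset.range K, g k x :=
    ae_all_iff.2 fun K => by
      filter_upwards [AEEqFun.coeFn_finsetSum (Finset.range K) g] with x hx
      simpa using hx
  -- the partial sum splits off from the total sum, at almost every point
  have hsplit : ∀ᵐ x ∂μ, ∀ K, (∑' k, ENNReal.ofReal (g k x)).toReal
      = (∑ k ∈ Finset.range K, g k x) + (∑' k, ENNReal.ofReal (g (k + K) x)).toReal := by
    filter_upwards [hfin, hg0] with x h1 h2 K
    rw [← ENNReal.summable.sum_add_tsum_nat_add' (k := K)] at h1 ⊢
    rw [ENNReal.toReal_add (ENNReal.add_ne_top.1 h1).1 (ENNReal.add_ne_top.1 h1).2,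
      ENNReal.toReal_sum fun _ _ => ENNReal.ofReal_ne_top]
    simp only [ENNReal.toReal_ofReal (h2 _)]
  have hmk := AEEqFun.coeFn_mk (μ := μ) _ hm.aestronglyMeasurable
  refine ⟨AEEqFun.mk _ hm.aestronglyMeasurable, ⟨?_, ?_⟩, fun K => ?_⟩
  · rintro _ ⟨K, rfl⟩
    rw [← AEEqFun.coeFn_le]
    filter_upwards [hsum, hsplit, hmk] with x h1 h2 h3
    rw [h3, h1, h2 K]
    exact le_add_of_nonneg_right ENNReal.toReal_nonneg
  · intro u hu
    have hu' : ∀ᵐ x ∂μ, ∀ K, (∑ k ∈ Finset.range K, g k : L0 μ) x ≤ u x :=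
      ae_all_iff.2 fun K => AEEqFun.coeFn_le.2 (hu ⟨K, rfl⟩)
    rw [← AEEqFun.coeFn_le]
    filter_upwards [hu', hsum, hmk, hfin, hg0] with x h1 h2 h3 h4 h5
    rw [h3]
    have h6 : 0 ≤ u x := by have := h1 0; rw [h2] at this; simpa using this
    refine ENNReal.toReal_le_of_le_ofReal h6 (ENNReal.tsum_le_of_sum_range_le fun K => ?_)
    rw [← ENNReal.ofReal_sum_of_nonneg fun i _ => h5 i]
    exact ENNReal.ofReal_le_ofReal (by rw [← h2]; exact h1 K)
  · simp only [size]
    rw [← lintegral_tsum fun k => (size_meas (g (k + K))).aemeasurable]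
    refine lintegral_mono_ae (aeFin ?_)
    filter_upwards [hsum, hsplit, hmk, hfin, hg0,
      AEEqFun.coeFn_sub (AEEqFun.mk _ hm.aestronglyMeasurable) (∑ k ∈ Finset.range K, g k)]
      with x h1 h2 h3 h4 h5 h6
    rw [h6, Pi.sub_apply, h3, h1, h2 K, add_sub_cancel_left,
      Real.enorm_eq_ofReal ENNReal.toReal_nonneg]
    simp only [Real.enorm_eq_ofReal (h5 _)]
    exact (min_le_min_right _ ENNReal.ofReal_toReal_le).trans (min_tsum_le _)

/-! ### Approximation of lattice infima -/

/-- For a set stable under binary infima, the lattice infimum is approximated in size by elements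
of the set. A sequence minimising the size of the gap may be taken decreasing, and its limit is
then a lower bound of the set after truncating the gap at height `1`. -/
theorem exists_small_of_isGLB {S : Set (L0 μ)} {c : L0 μ} (hne : S.Nonempty)
    (hinf : ∀ f ∈ S, ∀ g ∈ S, f ⊓ g ∈ S) (h : IsGLB S c) {ε : ENNReal} (hε : ε ≠ 0) :
    ∃ g ∈ S, size (g - c) ≤ ε := by
  have hpos : ∀ g ∈ S, ∀ᵐ x ∂μ, (g - c : L0 μ) x = g x - c x ∧ 0 ≤ (g - c : L0 μ) x := by
    intro g hg
    filter_upwards [AEEqFun.coeFn_le.2 (h.1 hg), AEEqFun.coeFn_sub g c] with x h1 h2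
    rw [h2]
    exact ⟨rfl, sub_nonneg.2 h1⟩
  have : Nonempty S := hne.to_subtype
  set m : ENNReal := ⨅ g : S, size (g.1 - c) with hm
  have hmle : ∀ g ∈ S, m ≤ size (g - c) := fun g hg => iInf_le (fun g : S => size (g.1 - c)) ⟨g, hg⟩
  have hmtop : m ≠ ⊤ := ne_top_of_le_ne_top (size_ne_top _) (hmle _ hne.some_mem)
  have hex : ∀ k : ℕ, ∃ g ∈ S, size (g - c) < m + ((k : ENNReal) + 1)⁻¹ := by
    intro k
    have hlt : m < m + ((k : ENNReal) + 1)⁻¹ :=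
      ENNReal.lt_add_right hmtop (ENNReal.inv_ne_zero.2 (by finiteness))
    obtain ⟨g, hg⟩ := iInf_lt_iff.1 (hm ▸ hlt)
    exact ⟨g.1, g.2, hg⟩
  choose g hgS hg using hex
  let G : ℕ → L0 μ := fun k => Nat.rec (g 0) (fun k f => f ⊓ g (k + 1)) k
  have hGS : ∀ k, G k ∈ S := by
    intro k
    induction k with
    | zero => exact hgS 0
    | succ k ih => exact hinf _ ih _ (hgS (k + 1))
  have hGg : ∀ k, G k ≤ g k := by
    intro k
    cases k with
    | zero => exact le_rfl
    | succ k => exact inf_le_right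
  have hGanti : ∀ k, G (k + 1) ≤ G k := fun k => inf_le_left
  have hGsize : ∀ k, size (G k - c) < m + ((k : ENNReal) + 1)⁻¹ := fun k =>
    (size_mono_nonneg (sub_nonneg.2 (h.1 (hGS k))) (sub_le_sub_right (hGg k) c)).trans_lt (hg k)
  -- the truncated gaps between `G k` and `c`, and their pointwise limit `W`
  let U : ℕ → X → ENNReal := fun k x => min ‖(G k - c : L0 μ) x‖ₑ 1
  have hU : ∀ k, Measurable (U k) := fun k => size_meas (G k - c)
  let W : X → ENNReal := fun x => ⨅ k, U k x
  have hW : Measurable W := Measurable.iInf hU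
  have hW1 : ∀ x, W x ≤ 1 := fun x => (iInf_le _ 0).trans (min_le_right _ _)
  have hVm : Measurable fun x => (W x).toReal := hW.ennreal_toReal
  let V : L0 μ := AEEqFun.mk _ hVm.aestronglyMeasurable
  have hV := AEEqFun.coeFn_mk (μ := μ) _ hVm.aestronglyMeasurable
  -- otherwise replacing `G k` by `G k ⊓ f` would push the size of the gap below `m`
  have key : ∀ f ∈ S, ∀ᵐ x ∂μ, W x ≤ ENNReal.ofReal ((f - c : L0 μ) x) := by
    intro f hf
    have hmf : Measurable fun x => ENNReal.ofReal ((f - c : L0 μ) x) :=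
      (f - c).measurable.ennreal_ofReal
    have hle : ∀ k : ℕ, ∫⁻ x, (W x - ENNReal.ofReal ((f - c : L0 μ) x)) ∂μ.toFinite
        ≤ ((k : ENNReal) + 1)⁻¹ := by
      intro k
      have hmk : Measurable fun x => min ‖(G k ⊓ f - c : L0 μ) x‖ₑ (1 : ENNReal) := size_meas _
      have hk1 : ∀ᵐ x ∂μ, min ‖(G k ⊓ f - c : L0 μ) x‖ₑ (1 : ENNReal)
          = min (U k x) (ENNReal.ofReal ((f - c : L0 μ) x)) := by
        filter_upwards [hpos _ (hGS k), hpos _ hf, hpos _ (hinf _ (hGS k) _ hf),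
          AEEqFun.coeFn_inf (G k) f] with x h1 h2 h3 h4
        simp only [U]
        rw [Real.enorm_eq_ofReal h1.2, Real.enorm_eq_ofReal h3.2, h3.1, h1.1, h2.1, h4,
          ← min_sub_sub_right, ENNReal.ofReal_min]
        simp only [min_comm, min_left_comm]
      calc ∫⁻ x, (W x - ENNReal.ofReal ((f - c : L0 μ) x)) ∂μ.toFinite
          ≤ ∫⁻ x, (U k x - min ‖(G k ⊓ f - c : L0 μ) x‖ₑ (1 : ENNReal)) ∂μ.toFinite := by
            refine lintegral_mono_ae (aeFin ?_)
            filter_upwards [hk1] with x hx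
            rw [hx]
            exact tsub_le_tsub (iInf_le _ k) (min_le_right _ _)
        _ = ∫⁻ x, U k x ∂μ.toFinite - size (G k ⊓ f - c) := by
            refine lintegral_sub hmk (size_ne_top _) (aeFin ?_)
            filter_upwards [hk1] with x hx
            rw [hx]
            exact min_le_left _ _
        _ ≤ (m + ((k : ENNReal) + 1)⁻¹) - m :=
            tsub_le_tsub (hGsize k).le (hmle _ (hinf _ (hGS k) _ hf))
        _ = _ := ENNReal.add_sub_cancel_left hmtop
    have h0 : ∫⁻ x, (W x - ENNReal.ofReal ((f - c : L0 μ) x)) ∂μ.toFinite = 0 := by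
      by_contra hne0
      obtain ⟨n, hn⟩ := ENNReal.exists_inv_nat_lt hne0
      refine absurd ((hle n).trans_lt (lt_of_le_of_lt ?_ hn)) (lt_irrefl _)
      exact ENNReal.inv_le_inv.2 le_self_add
    have h1 := (lintegral_eq_zero_iff (hW.sub hmf)).1 h0
    rw [EventuallyEq, ae_toFinite] at h1
    filter_upwards [h1] with x hx
    exact tsub_eq_zero_iff_le.1 hx
  have hV0 : c + V ≤ c := by
    refine h.2 fun f hf => ?_
    rw [← AEEqFun.coeFn_le]
    filter_upwards [key f hf, hV, AEEqFun.coeFn_add c V, hpos f hf] with x h1 h2 h3 h4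
    have h5 : (W x).toReal ≤ f x - c x := by
      rw [← h4.1]
      exact ENNReal.toReal_le_of_le_ofReal h4.2 h1
    rw [h3, Pi.add_apply, h2]
    linarith
  have hW0 : ∀ᵐ x ∂μ, W x = 0 := by
    filter_upwards [AEEqFun.coeFn_le.2 hV0, hV, AEEqFun.coeFn_add c V] with x h1 h2 h3
    rw [h3, Pi.add_apply, h2] at h1
    have h4 : (W x).toReal = 0 := le_antisymm (by linarith) ENNReal.toReal_nonneg
    rcases (ENNReal.toReal_eq_zero_iff _).1 h4 with h5 | h5
    · exact h5
    · exact absurd (h5 ▸ hW1 x) (by simp)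
  have hlim : ⨅ k, size (G k - c) = 0 := by
    have h1 : ∫⁻ x, W x ∂μ.toFinite = ⨅ k, ∫⁻ x, U k x ∂μ.toFinite := by
      refine lintegral_iInf_ae hU (fun k => aeFin ?_) (size_ne_top _)
      filter_upwards [hpos _ (hGS k), hpos _ (hGS (k + 1)), AEEqFun.coeFn_le.2 (hGanti k)]
        with x h1 h2 h3
      simp only [U]
      rw [Real.enorm_eq_ofReal h1.2, Real.enorm_eq_ofReal h2.2, h1.1, h2.1]
      exact min_le_min_right _ (ENNReal.ofReal_le_ofReal (by linarith))
    refine h1.symm.trans ?_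
    rw [lintegral_congr_ae (aeFin hW0)]
    simp
  obtain ⟨k, hk⟩ := iInf_lt_iff.1 (hlim ▸ pos_iff_ne_zero.2 hε)
  exact ⟨G k, hGS k, hk.le⟩

/-! ### Pointwise norms -/

section PointwiseNorm

variable {M : Type*} [AddCommGroup M] [Module (L0 μ) M] [BanachMod μ M]

theorem pn_nonneg (v : M) : 0 ≤ pn μ v := BanachMod.pn_nonneg v

theorem pn_add_le (v w : M) : pn μ (v + w) ≤ pn μ v + pn μ w := BanachMod.pn_add_le v w

theorem pn_smul (f : L0 μ) (v : M) : pn μ (f • v) = |f| * pn μ v := BanachMod.pn_smul f v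

theorem pn_zero : pn μ (0 : M) = 0 := (BanachMod.pn_eq_zero (μ := μ) (0 : M)).2 rfl

theorem pn_neg (v : M) : pn μ (-v) = pn μ v := by
  have h1 : (0 : L0 μ) ≤ 1 := by
    rw [← AEEqFun.coeFn_le]
    filter_upwards [AEEqFun.coeFn_zero (μ := μ) (β := ℝ), AEEqFun.coeFn_one (μ := μ) (β := ℝ)]
      with x h2 h3
    rw [h2, h3]
    exact zero_le_one
  rw [← neg_one_smul (L0 μ) v, pn_smul, abs_neg, abs_of_nonneg h1, one_mul]

theorem pn_sub_comm (v w : M) : pn μ (v - w) = pn μ (w - v) := by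
  rw [← neg_sub, pn_neg]

theorem pn_sub_le (v w : M) : pn μ (v - w) ≤ pn μ v + pn μ w := by
  rw [sub_eq_add_neg, ← pn_neg w]
  exact pn_add_le v (-w)

theorem pn_sum_le {ι : Type*} (s : Finset ι) (v : ι → M) :
    pn μ (∑ i ∈ s, v i) ≤ ∑ i ∈ s, pn μ (v i) :=
  Finset.le_sum_of_subadditive (pn μ) pn_zero.le pn_add_le s v

theorem size_pn_sub_pn_le (v w : M) : size (pn μ v - pn μ w) ≤ size (pn μ (v - w)) := by
  have h1 : pn μ v ≤ pn μ (v - w) + pn μ w := by simpa using pn_add_le (μ := μ) (v - w) w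
  have h2 : pn μ w ≤ pn μ (v - w) + pn μ v := by
    simpa [pn_sub_comm v w] using pn_add_le (μ := μ) (w - v) v
  rw [← AEEqFun.coeFn_le] at h1 h2
  apply size_mono
  filter_upwards [h1, h2, AEEqFun.coeFn_sub (pn μ v) (pn μ w),
    AEEqFun.coeFn_add (pn μ (v - w)) (pn μ w), AEEqFun.coeFn_add (pn μ (v - w)) (pn μ v)]
    with x h1 h2 h3 h4 h5
  rw [h4] at h1
  rw [h5] at h2
  rw [h3]
  simp only [Pi.add_apply, Pi.sub_apply] at *
  refine le_trans (abs_le.2 ⟨?_, ?_⟩) (le_abs_self _) <;> linarith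

end PointwiseNorm

/-! ### Representations of tensors -/

/-- Summation over the first `K` blocks of a countable union of finite blocks enumerated by `φ`. -/
theorem sum_block {E : Type*} [AddCommMonoid E] {n : ℕ → ℕ} (φ : ℕ ≃ Σ k, Fin (n k + 1))
    (f : (Σ k, Fin (n k + 1)) → E) (K : ℕ) :
    ∑ m ∈ ((Finset.range K).sigma fun k => (Finset.univ : Finset (Fin (n k + 1)))).map
      φ.symm.toEmbedding, f (φ m) = ∑ k ∈ Finset.range K, ∑ i, f ⟨k, i⟩ := by
  simp [Finset.sum_map, Finset.sum_sigma]

section Tensor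

variable {M N P : Type*} [AddCommGroup M] [Module (L0 μ) M] [BanachMod μ M]
  [AddCommGroup N] [Module (L0 μ) N] [BanachMod μ N]
  [AddCommGroup P] [Module (L0 μ) P] [BanachMod μ P]

theorem piReps_nonempty (α : M ⊗[L0 μ] N) : (piReps μ α).Nonempty := by
  obtain ⟨s, hs⟩ := TensorProduct.exists_finset α
  refine ⟨_, s.card, fun i => (s.equivFin.symm i).1.1, fun i => (s.equivFin.symm i).1.2, ?_, rfl⟩
  rw [hs, ← Finset.sum_coe_sort s]
  exact (Equiv.sum_comp s.equivFin.symm fun i : s => i.1.1 ⊗ₜ[L0 μ] i.1.2).symm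

/-- Two representations of a tensor can be glued along a measurable set, so the values
`∑ |v i| |w i|` are stable under binary infima. -/
theorem piReps_inf (α : M ⊗[L0 μ] N) : ∀ f ∈ piReps μ α, ∀ g ∈ piReps μ α, f ⊓ g ∈ piReps μ α := by
  rintro f ⟨n, v, w, hα, hf⟩ g ⟨n', v', w', hα', hg⟩
  obtain ⟨χ, h0, h1, hχ⟩ := exists_glue f g
  refine ⟨n + n', Fin.append (fun i => χ • v i) (fun i => (1 - χ) • v' i), Fin.append w w', ?_, ?_⟩
  · simp only [Fin.sum_univ_add, Fin.append_left, Fin.append_right, ← TensorProduct.smul_tmul',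
      ← Finset.smul_sum]
    rw [← hα, ← hα', ← add_smul, add_sub_cancel, one_smul]
  · simp only [Fin.sum_univ_add, Fin.append_left, Fin.append_right, pn_smul,
      abs_of_nonneg h0, abs_of_nonneg h1, mul_assoc, ← Finset.mul_sum]
    rw [← hf, ← hg, hχ]

/-- Every tensor has a nonempty finite representation whose value is close in size to its
projective pointwise norm. -/
theorem exists_rep {e : M ⊗[L0 μ] N →ₗ[L0 μ] P} (hP : IsPiTensor μ M N P e) (α : M ⊗[L0 μ] N)
    {ε : ENNReal} (hε : ε ≠ 0) :
    ∃ (n : ℕ) (v : Fin (n + 1) → M) (w : Fin (n + 1) → N), α = ∑ i, v i ⊗ₜ[L0 μ] w i ∧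
      size ((∑ i, pn μ (v i) * pn μ (w i)) - pn μ (e α)) ≤ ε := by
  obtain ⟨g, ⟨n, v, w, hα, hg⟩, hs⟩ :=
    exists_small_of_isGLB (piReps_nonempty α) (piReps_inf α) (hP.pn_emb α) hε
  refine ⟨n, Fin.cons 0 v, Fin.cons 0 w, ?_, ?_⟩
  · simp [Fin.sum_univ_succ, ← hα]
  · simpa [Fin.sum_univ_succ, pn_zero, ← hg] using hs

theorem pn_tmul_le {e : M ⊗[L0 μ] N →ₗ[L0 μ] P} (hP : IsPiTensor μ M N P e) (v : M) (w : N) :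
    pn μ (e (v ⊗ₜ[L0 μ] w)) ≤ pn μ v * pn μ w :=
  (hP.pn_emb _).1 ⟨1, fun _ => v, fun _ => w, by simp, by simp⟩

/-- Every element of the projective tensor product is the sum of a series of elementary tensors
whose value `∑ |v n| |w n|` is close in size to the pointwise norm of the element. -/
theorem exists_series {e : M ⊗[L0 μ] N →ₗ[L0 μ] P} (hP : IsPiTensor μ M N P e) (p : P)
    {δ : ENNReal} (hδ : δ ≠ 0) :
    ∃ (v : ℕ → M) (w : ℕ → N) (G : L0 μ),
      Meml1 μ (fun n => e (v n ⊗ₜ[L0 μ] w n)) ∧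
      HasSumMod μ (fun n => e (v n ⊗ₜ[L0 μ] w n)) p ∧
      IsLUB {h : L0 μ | ∃ F : Finset ℕ, h = ∑ n ∈ F, pn μ (v n) * pn μ (w n)} G ∧
      size (G - pn μ p) ≤ δ := by
  -- the telescoping estimate below uses each `ε k` at most three times
  obtain ⟨ε, hε0, hε⟩ := ENNReal.exists_pos_sum_of_countable (ε := δ / 3)
    (ENNReal.div_pos hδ (by finiteness)).ne' ℕ
  have hεne : ∑' k, (ε k : ENNReal) ≠ ⊤ := hε.ne_top
  have hd : ∀ k, ∃ α : M ⊗[L0 μ] N, size (pn μ (e α - p)) ≤ ε k := by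
    intro k
    obtain ⟨α, hα⟩ := hP.dense p (ε k) (hε0 k)
    exact ⟨α, (size_le_of_dL0 hα).trans_eq (ENNReal.ofReal_coe_nnreal)⟩
  choose α hα using hd
  let A : ℕ → M ⊗[L0 μ] N := fun k => Nat.casesOn k 0 α
  have hrep := fun k => exists_rep hP (A (k + 1) - A k) (ε := (ε k : ENNReal))
    (by simpa using (hε0 k).ne')
  choose n v w hvw hg using hrep
  set g : ℕ → L0 μ := fun k => ∑ i, pn μ (v k i) * pn μ (w k i) with hgdef
  have hg0 : ∀ k, 0 ≤ g k := fun k =>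
    Finset.sum_nonneg fun i _ => L0_mul_nonneg (pn_nonneg _) (pn_nonneg _)
  have hgsucc : ∀ k, size (g (k + 1)) ≤ ε (k + 1) + ε (k + 1) + ε k := by
    intro k
    have h1 : size (pn μ (e (A (k + 1 + 1) - A (k + 1)))) ≤ ε (k + 1) + ε k := by
      have h2 : e (A (k + 1 + 1) - A (k + 1)) = (e (α (k + 1)) - p) - (e (α k) - p) := by
        simp [A]
      rw [h2]
      exact (size_mono_nonneg (pn_nonneg _) (pn_sub_le _ _)).trans
        ((size_add_le _ _).trans (add_le_add (hα _) (hα _)))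
    have h3 : g (k + 1) = (g (k + 1) - pn μ (e (A (k + 1 + 1) - A (k + 1))))
        + pn μ (e (A (k + 1 + 1) - A (k + 1))) := by abel
    rw [h3, add_assoc (ε (k + 1) : ENNReal)]
    exact (size_add_le _ _).trans (add_le_add (hg (k + 1)) h1)
  have hεs : ∑' k, (ε k : ENNReal) = ε 0 + ∑' k, (ε (k + 1) : ENNReal) :=
    tsum_eq_zero_add' ENNReal.summable
  have htail : ∑' k, size (g (k + 1)) ≤
      ∑' k, (ε (k + 1) : ENNReal) + ∑' k, (ε (k + 1) : ENNReal) + ∑' k, (ε k : ENNReal) := by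
    rw [← ENNReal.tsum_add, ← ENNReal.tsum_add]
    exact ENNReal.tsum_le_tsum hgsucc
  have hεne' : ∑' k, (ε (k + 1) : ENNReal) ≠ ⊤ := by
    rw [hεs] at hεne
    exact (ENNReal.add_ne_top.1 hεne).2
  have hgs : ∑' k, size (g k) ≠ ⊤ := by
    rw [tsum_eq_zero_add' ENNReal.summable]
    refine ENNReal.add_ne_top.2 ⟨size_ne_top _, ne_top_of_le_ne_top ?_ htail⟩
    exact ENNReal.add_ne_top.2 ⟨ENNReal.add_ne_top.2 ⟨hεne', hεne'⟩, hεne⟩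
  obtain ⟨G, hGlub, hGtail⟩ := exists_series_sum g hg0 hgs
  -- concatenation of the finite representations of the differences `A (k + 1) - A k`
  have : Infinite (Σ k, Fin (n k + 1)) :=
    Infinite.of_injective (fun k => (⟨k, 0⟩ : Σ k, Fin (n k + 1)))
      fun a b hab => congrArg Sigma.fst hab
  obtain ⟨φ⟩ : Nonempty (ℕ ≃ Σ k, Fin (n k + 1)) := nonempty_equiv_of_countable
  let B : ℕ → Finset ℕ := fun K =>
    ((Finset.range K).sigma fun k => (Finset.univ : Finset (Fin (n k + 1)))).map
      φ.symm.toEmbedding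
  have hBmem : ∀ K m, m ∈ B K ↔ (φ m).1 < K := by
    intro K m
    simp only [B, Finset.mem_map_equiv, Finset.mem_sigma, Equiv.symm_symm, Finset.mem_range,
      Finset.mem_univ, and_true]
  let V : ℕ → M := fun m => v (φ m).1 (φ m).2
  let W : ℕ → N := fun m => w (φ m).1 (φ m).2
  have hBval : ∀ K, ∑ m ∈ B K, pn μ (V m) * pn μ (W m) = ∑ k ∈ Finset.range K, g k := by
    intro K
    exact sum_block φ (fun s => pn μ (v s.1 s.2) * pn μ (w s.1 s.2)) K
  have hBsum : ∀ K, ∑ m ∈ B K, e (V m ⊗ₜ[L0 μ] W m) = e (A K) := by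
    intro K
    rw [← map_sum]
    congr 1
    have h1 : ∑ k ∈ Finset.range K, (A (k + 1) - A k) = A K := by
      rw [Finset.sum_range_sub]
      exact sub_zero (A K)
    rw [← h1]
    simp only [hvw]
    exact sum_block φ (fun s => v s.1 s.2 ⊗ₜ[L0 μ] w s.1 s.2) K
  have hVW0 : ∀ m, 0 ≤ pn μ (V m) * pn μ (W m) := fun m =>
    L0_mul_nonneg (pn_nonneg _) (pn_nonneg _)
  have hFle : ∀ F : Finset ℕ, ∑ m ∈ F, pn μ (V m) * pn μ (W m) ≤ G := by
    intro F
    have hsub : F ⊆ B (F.sup (fun m => (φ m).1) + 1) := fun m hm =>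
      (hBmem _ m).2 (Nat.lt_succ_of_le (Finset.le_sup (f := fun m => (φ m).1) hm))
    exact (Finset.sum_le_sum_of_subset_of_nonneg hsub fun m _ _ => hVW0 m).trans
      ((hBval _).le.trans (hGlub.1 ⟨_, rfl⟩))
  have hsumle : ∀ F : Finset ℕ, ∑ m ∈ F, pn μ (e (V m ⊗ₜ[L0 μ] W m))
      ≤ ∑ m ∈ F, pn μ (V m) * pn μ (W m) := fun F =>
    Finset.sum_le_sum fun m _ => pn_tmul_le hP _ _
  refine ⟨V, W, G, ?_, ?_, ⟨?_, ?_⟩, ?_⟩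
  · obtain ⟨s, hs⟩ := exists_isLUB_range
      (fun F : Finset ℕ => ∑ m ∈ F, pn μ (e (V m ⊗ₜ[L0 μ] W m))) G
      fun F => (hsumle F).trans (hFle F)
    refine ⟨s, ?_⟩
    convert hs using 1
    ext h
    simp [l1PartialSums, eq_comm]
  · have hlub : ∀ F : Finset ℕ, ∃ s, IsLUB (sumUB μ (fun m => e (V m ⊗ₜ[L0 μ] W m)) p F) s := by
      intro F
      have : Nonempty {H : Finset ℕ // Disjoint H F} := ⟨⟨∅, by simp⟩⟩
      obtain ⟨s, hs⟩ := exists_isLUB_range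
        (fun H : {H : Finset ℕ // Disjoint H F} =>
          pn μ (p - (∑ m ∈ F, e (V m ⊗ₜ[L0 μ] W m) + ∑ m ∈ H.1, e (V m ⊗ₜ[L0 μ] W m))))
        (pn μ p + (G + G)) fun H =>
          (pn_sub_le _ _).trans (add_le_add_right ((pn_add_le _ _).trans (add_le_add
            ((pn_sum_le _ _).trans ((hsumle _).trans (hFle _)))
            ((pn_sum_le _ _).trans ((hsumle _).trans (hFle _))))) _)
      refine ⟨s, ?_⟩
      convert hs using 1
      ext h
      simp [sumUB, eq_comm]
    choose b hb using hlub
    refine ⟨b, hb, ?_, ?_⟩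
    · rintro _ ⟨F, rfl⟩
      exact (pn_nonneg _).trans ((hb F).1 ⟨∅, by simp, rfl⟩)
    · intro c hc
      have hbB : ∀ K, b (B K) ≤ pn μ (e (A K) - p) + (G - ∑ k ∈ Finset.range K, g k) := by
        intro K
        refine (hb (B K)).2 ?_
        rintro _ ⟨H, hH, rfl⟩
        rw [hBsum, ← sub_sub, pn_sub_comm (e (A K)) p]
        refine (pn_sub_le _ _).trans (add_le_add_right ?_ _)
        refine (pn_sum_le _ _).trans ((hsumle _).trans ?_)
        rw [le_sub_iff_add_le, ← hBval, ← Finset.sum_union hH]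
        exact hFle _
      refine nonpos_of_le_small fun η hη => ?_
      have hlim : Tendsto (fun K => (ε K : ENNReal) + ∑' k, size (g (k + (K + 1)))) atTop
          (nhds (0 + 0)) :=
        (ENNReal.tendsto_atTop_zero_of_tsum_ne_top hεne).add
          ((tendsto_add_atTop_iff_nat 1).2 (ENNReal.tendsto_sum_nat_add _ hgs))
      rw [add_zero] at hlim
      obtain ⟨K, hK⟩ := (hlim.eventually (gt_mem_nhds (pos_iff_ne_zero.2 hη))).exists
      exact ⟨_, (hc ⟨B (K + 1), rfl⟩).trans (hbB (K + 1)), (size_add_le _ _).trans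
        ((add_le_add (hα K) (hGtail (K + 1))).trans hK.le)⟩
  · rintro _ ⟨F, rfl⟩
    exact hFle F
  · intro u hu
    refine hGlub.2 ?_
    rintro _ ⟨K, rfl⟩
    exact hu ⟨B K, (hBval K).symm⟩
  · have h1 : G - pn μ p = (G - ∑ k ∈ Finset.range 1, g k) + ((g 0 - pn μ (e (A 1 - A 0)))
        + (pn μ (e (α 0)) - pn μ p)) := by
      have h2 : e (A 1 - A 0) = e (α 0) := by simp [A]
      rw [h2, Finset.sum_range_one]
      abel
    rw [h1]
    calc _ ≤ (∑' k, (ε (k + 1) : ENNReal) + ∑' k, (ε (k + 1) : ENNReal) + ∑' k, (ε k : ENNReal))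
          + (ε 0 + ε 0) :=
          (size_add_le _ _).trans (add_le_add ((hGtail 1).trans htail)
            ((size_add_le _ _).trans (add_le_add (hg 0)
              ((size_pn_sub_pn_le _ _).trans (hα 0)))))
      _ = 3 * ∑' k, (ε k : ENNReal) := by rw [hεs]; ring
      _ ≤ 3 * (δ / 3) := by gcongr
      _ = δ := ENNReal.mul_div_cancel (by norm_num) (by norm_num)

end Tensor

end Aux

/-! ### The series representation -/

/-- series characterisation of the projective pointwise norm on the
completion. For every `α ∈ ℳ ⊗̂_π 𝒩`,
`|α|_π = ⋀ { ∑_{n∈ℕ} |v_n||w_n| : (v_n ⊗ w_n)_n ∈ ℓ₁(ℕ, ℳ ⊗̂_π 𝒩), α = ∑_n v_n ⊗ w_n }`,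
where `∑_{n∈ℕ} v_n ⊗ w_n` is the sum of the summable family in `ℳ ⊗̂_π 𝒩` and
`∑_{n∈ℕ} |v_n||w_n| = ⋁_F ∑_{n ∈ F} |v_n||w_n|`. Here `P` realizes `ℳ ⊗̂_π 𝒩`. -/
theorem projective_norm_series_representation
    (μ : Measure X) [SigmaFinite μ]
    (M : Type*) [AddCommGroup M] [Module (L0 μ) M] [BanachMod μ M]
    (N : Type*) [AddCommGroup N] [Module (L0 μ) N] [BanachMod μ N]
    (P : Type*) [AddCommGroup P] [Module (L0 μ) P] [BanachMod μ P]
    (e : M ⊗[L0 μ] N →ₗ[L0 μ] P) (hP : IsPiTensor μ M N P e) (p : P) :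
    IsGLB {g : L0 μ | ∃ (v : ℕ → M) (w : ℕ → N),
      Meml1 μ (fun n => e (v n ⊗ₜ[L0 μ] w n)) ∧
      HasSumMod μ (fun n => e (v n ⊗ₜ[L0 μ] w n)) p ∧
      IsLUB {h : L0 μ | ∃ F : Finset ℕ, h = ∑ n ∈ F, pn μ (v n) * pn μ (w n)} g}
      (pn μ p) := by
  constructor
  · rintro g ⟨v, w, -, ⟨b, hb, hb0⟩, hg⟩
    have h : pn μ p - g ≤ 0 := by
      refine hb0.2 ?_
      rintro _ ⟨F, rfl⟩
      rw [sub_le_iff_le_add]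
      have h1 : pn μ (p - ∑ n ∈ F, e (v n ⊗ₜ[L0 μ] w n)) ≤ b F :=
        (hb F).1 ⟨∅, by simp, by simp⟩
      have h2 : pn μ (∑ n ∈ F, e (v n ⊗ₜ[L0 μ] w n)) ≤ g :=
        (pn_sum_le _ _).trans ((Finset.sum_le_sum fun n _ => pn_tmul_le hP _ _).trans
          (hg.1 ⟨F, rfl⟩))
      calc pn μ p = pn μ ((p - ∑ n ∈ F, e (v n ⊗ₜ[L0 μ] w n))
            + ∑ n ∈ F, e (v n ⊗ₜ[L0 μ] w n)) := by rw [sub_add_cancel]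
        _ ≤ _ := (pn_add_le _ _).trans (add_le_add h1 h2)
    exact sub_nonpos.1 h
  · intro c hc
    refine sub_nonpos.1 (nonpos_of_le_small fun δ hδ => ?_)
    obtain ⟨v, w, G, h1, h2, h3, h4⟩ := exists_series hP p hδ
    exact ⟨G - pn μ p, sub_le_sub_right (hc ⟨v, w, h1, h2, h3⟩) _, h4⟩

end Paper
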